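/- arXiv:1310.2754 — 2 statements merged into one kernel-verified Lean document; each statement's English description precedes it below -/
import Mathlib

section
/- There exists a constant C > 0 such that a_n − a_{n+1} ≤ C n^{−(1+1/θ)} for all n ≥ 1. -/
/-!
The quantity `a_n^(-θ)` grows at least linearly. Writing `b = a_{n+1}`, the recursion gives
`a_n^(-θ) = b^(-θ) (1 + b^θ)^(-θ)`, and Bernoulli's inequality bounds the second factor by
`1 - m b^θ / (1 + b^θ)` with `m = min 1 θ`, so each step increases `a_n^(-θ)` by at least
`m / (1 + a_0^θ)`. Finally `a_n - a_{n+1} = a_{n+1}^(1 + θ) ≤ (a_n^(-θ))^(-(1 + 1/θ))`.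
-/

theorem rpow_le_one_add_min_one_mul_sub_one {y p : ℝ} (hy₀ : 0 ≤ y) (hy₁ : y ≤ 1) (hp : 0 ≤ p) :
    y ^ p ≤ 1 + min 1 p * (y - 1) := by
  have hmin : 0 ≤ min 1 p := le_min zero_le_one hp
  calc y ^ p ≤ y ^ min 1 p :=
        Real.rpow_le_rpow_of_exponent_ge' hy₀ hy₁ hmin (min_le_right 1 p)
    _ = (1 + (y - 1)) ^ min 1 p := by rw [add_sub_cancel]
    _ ≤ 1 + min 1 p * (y - 1) :=
        rpow_one_add_le_one_add_mul_self (by linarith) hmin (min_le_left 1 p)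

theorem rpow_neg_mul_one_add_rpow_add_le {b θ : ℝ} (hb : 0 < b) (hθ : 0 ≤ θ) :
    (b * (1 + b ^ θ)) ^ (-θ) + min 1 θ / (1 + b ^ θ) ≤ b ^ (-θ) := by
  have hx : 0 < b ^ θ := Real.rpow_pos_of_pos hb θ
  have bernoulli : ((1 + b ^ θ)⁻¹) ^ θ ≤ 1 + min 1 θ * ((1 + b ^ θ)⁻¹ - 1) :=
    rpow_le_one_add_min_one_mul_sub_one (by positivity) (inv_le_one_of_one_le₀ (by linarith)) hθ
  have factor : (b * (1 + b ^ θ)) ^ (-θ) = b ^ (-θ) * ((1 + b ^ θ)⁻¹) ^ θ := by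
    rw [Real.mul_rpow hb.le (by positivity), Real.inv_rpow (by positivity),
      Real.rpow_neg (x := 1 + b ^ θ) (by positivity)]
  calc (b * (1 + b ^ θ)) ^ (-θ) + min 1 θ / (1 + b ^ θ)
      ≤ b ^ (-θ) * (1 + min 1 θ * ((1 + b ^ θ)⁻¹ - 1)) + min 1 θ / (1 + b ^ θ) := by
        rw [factor]
        gcongr
    _ = b ^ (-θ) := by
        rw [Real.rpow_neg hb.le]
        field_simp
        ring

theorem add_nsmul_le_of_add_le_succ {M : Type*} [AddMonoid M] [Preorder M] [AddRightMono M]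
    {u : ℕ → M} {c : M} (hu : ∀ n, u n + c ≤ u (n + 1)) (n : ℕ) : u 0 + n • c ≤ u n := by
  induction n with
  | zero => simp
  | succ n ih =>
    calc u 0 + (n + 1) • c = u 0 + n • c + c := by rw [succ_nsmul, add_assoc]
      _ ≤ u n + c := by gcongr
      _ ≤ u (n + 1) := hu n

section Recursion

variable {θ : ℝ} {a : ℕ → ℝ}

theorem antitone_of_mul_one_add_rpow_eq (hpos : ∀ n, 0 < a n)
    (hrec : ∀ n, a (n + 1) * (1 + a (n + 1) ^ θ) = a n) : Antitone a :=
  antitone_nat_of_succ_le fun n ↦ by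
    rw [← hrec n]
    exact le_mul_of_one_le_right (hpos _).le
      (le_add_of_nonneg_right (Real.rpow_nonneg (hpos _).le θ))

theorem nat_mul_le_rpow_neg_of_mul_one_add_rpow_eq (hθ : 0 ≤ θ) (hpos : ∀ n, 0 < a n)
    (hrec : ∀ n, a (n + 1) * (1 + a (n + 1) ^ θ) = a n) (n : ℕ) :
    n * (min 1 θ / (1 + a 0 ^ θ)) ≤ a n ^ (-θ) := by
  have increment (k : ℕ) : a k ^ (-θ) + min 1 θ / (1 + a 0 ^ θ) ≤ a (k + 1) ^ (-θ) := by
    have hx : 0 < a (k + 1) ^ θ := Real.rpow_pos_of_pos (hpos _) θ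
    have hle : a (k + 1) ≤ a 0 := antitone_of_mul_one_add_rpow_eq hpos hrec (Nat.zero_le _)
    calc a k ^ (-θ) + min 1 θ / (1 + a 0 ^ θ)
        ≤ (a (k + 1) * (1 + a (k + 1) ^ θ)) ^ (-θ) + min 1 θ / (1 + a (k + 1) ^ θ) := by
          rw [hrec k]
          gcongr
          exact (hpos _).le
      _ ≤ a (k + 1) ^ (-θ) := rpow_neg_mul_one_add_rpow_add_le (hpos _) hθ
  calc n * (min 1 θ / (1 + a 0 ^ θ)) ≤ a 0 ^ (-θ) + n • (min 1 θ / (1 + a 0 ^ θ)) := by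
        rw [nsmul_eq_mul]
        exact le_add_of_nonneg_left (Real.rpow_nonneg (hpos 0).le _)
    _ ≤ a n ^ (-θ) := add_nsmul_le_of_add_le_succ (u := fun n ↦ a n ^ (-θ)) increment n

theorem sub_succ_le_rpow_of_mul_one_add_rpow_eq (hθ : -1 ≤ θ) (hpos : ∀ n, 0 < a n)
    (hrec : ∀ n, a (n + 1) * (1 + a (n + 1) ^ θ) = a n) (n : ℕ) :
    a n - a (n + 1) ≤ a n ^ (1 + θ) :=
  calc a n - a (n + 1) = a (n + 1) ^ (1 + θ) := by
        rw [← hrec n, Real.rpow_add (hpos _), Real.rpow_one]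
        ring
    _ ≤ a n ^ (1 + θ) := Real.rpow_le_rpow (hpos _).le
        (antitone_of_mul_one_add_rpow_eq hpos hrec n.le_succ) (by linarith)

theorem intermittent_sequence_gap_general (hθ : 0 < θ) (hpos : ∀ n, 0 < a n)
    (hrec : ∀ n, a (n + 1) * (1 + a (n + 1) ^ θ) = a n) {n : ℕ} (hn : 1 ≤ n) :
    a n - a (n + 1) ≤
      (min 1 θ / (1 + a 0 ^ θ)) ^ (-(1 + 1 / θ)) * (n : ℝ) ^ (-(1 + 1 / θ)) := by
  set c := min 1 θ / (1 + a 0 ^ θ)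
  have hc : 0 < c :=
    div_pos (lt_min one_pos hθ) (add_pos one_pos (Real.rpow_pos_of_pos (hpos 0) θ))
  have hn₀ : (0 : ℝ) < n := Nat.cast_pos.mpr hn
  calc a n - a (n + 1) ≤ a n ^ (1 + θ) :=
        sub_succ_le_rpow_of_mul_one_add_rpow_eq (by linarith) hpos hrec n
    _ = (a n ^ (-θ)) ^ (-(1 + 1 / θ)) := by
        rw [← Real.rpow_mul (hpos n).le]
        congr 1
        field_simp
        ring
    _ ≤ (n * c) ^ (-(1 + 1 / θ)) :=
        Real.rpow_le_rpow_of_nonpos (by positivity)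
          (nat_mul_le_rpow_neg_of_mul_one_add_rpow_eq hθ.le hpos hrec n)
          (neg_nonpos.mpr (by positivity))
    _ = c ^ (-(1 + 1 / θ)) * (n : ℝ) ^ (-(1 + 1 / θ)) := by
        rw [Real.mul_rpow hn₀.le hc.le, mul_comm]

end Recursion

/-- Let `0 < θ < 1`, let `φ(a) = a(1 + a^θ)` and let `(a_n)` be defined by
`a₀ ∈ (0,1)` and `a_{n+1} ∈ (0, a_n)` with `φ(a_{n+1}) = a_n`. Then there is a constant
`C > 0` such that `a_n - a_{n+1} ≤ C n^{-(1 + 1/θ)}` for all `n ≥ 1`. -/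
theorem intermittent_sequence_gap (θ : ℝ) (hθ0 : 0 < θ) (hθ1 : θ < 1)
    (a : ℕ → ℝ) (ha0 : a 0 ∈ Set.Ioo (0 : ℝ) 1)
    (hrec : ∀ n : ℕ, a (n + 1) ∈ Set.Ioo 0 (a n) ∧
      a (n + 1) * (1 + a (n + 1) ^ θ) = a n) :
    ∃ C : ℝ, 0 < C ∧ ∀ n : ℕ, 1 ≤ n →
      a n - a (n + 1) ≤ C * (n : ℝ) ^ (-(1 + 1 / θ)) := by
  have hpos (n : ℕ) : 0 < a n := (hrec n).1.1.trans (hrec n).1.2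
  have h₀ : 0 < a 0 ^ θ := Real.rpow_pos_of_pos (hpos 0) θ
  exact ⟨(min 1 θ / (1 + a 0 ^ θ)) ^ (-(1 + 1 / θ)), by positivity, fun n hn ↦
    intermittent_sequence_gap_general hθ0 hpos (fun k ↦ (hrec k).2) hn⟩
end

section
/- There exists a constant C > 0 such that for all n ≥ 1, all 1 ≤ i ≤ n and all a, b ∈ [a_{n+1}, a_n], one has log((φ^i)'(a) / (φ^i)'(b)) ≤ C · |φ^i(a) − φ^i(b)| / (a_{n−i} − a_{n−i+1}), and moreover this quantity is at most C. -/
/-!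
On `[u, v]` with `0 < u`, the slopes of `z ↦ z ^ θ` agree up to the factor `(v / u) ^ (θ + 1)`.
Since `a k / a (k + 1)` is bounded and `φ' = 1 + (1 + θ) z ^ θ`, the variation of `log φ'` on
`[a (k + 1), a k]`, measured relative to the length of that interval, is at most
`ε k = c * (a k ^ θ - a (k + 1) ^ θ)`, and these bounds telescope to a finite sum.

When `φ` maps `[a (k + 1), a k]` onto the next interval, relative distances shrink at most by the
factor `exp (-ε k)`, so along an orbit they are all at most `exp (∑ ε k)` times the final one.
Adding up the variations of `log φ'` along the orbit then bounds that of `log (φ^[i])'` by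
`(∑ ε k) * exp (∑ ε k)` times the final relative distance.
-/

open Set Real

section MeanValue

lemma exists_abs_sub_eq_abs_deriv_mul {f : ℝ → ℝ} {s : Set ℝ} (hs : Convex ℝ s)
    (hf : ∀ z ∈ s, DifferentiableAt ℝ f z) {x y : ℝ} (hx : x ∈ s) (hy : y ∈ s) :
    ∃ z ∈ s, |f x - f y| = |deriv f z| * |x - y| := by
  obtain ⟨z, hz, hslope⟩ :=
    domain_mvt (fun z hz ↦ (hf z hz).hasFDerivAt.hasFDerivWithinAt) hs hy hx
  refine ⟨z, hs.segment_subset hy hx hz, ?_⟩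
  rw [hslope, fderiv_eq_smul_deriv, smul_eq_mul, abs_mul, mul_comm]

lemma abs_sub_mul_abs_sub_le_of_abs_deriv_le {f : ℝ → ℝ} {s : Set ℝ} (hs : Convex ℝ s)
    (hf : ∀ z ∈ s, DifferentiableAt ℝ f z) {M : ℝ}
    (hM : ∀ z ∈ s, ∀ w ∈ s, |deriv f z| ≤ M * |deriv f w|)
    {x y x' y' : ℝ} (hx : x ∈ s) (hy : y ∈ s) (hx' : x' ∈ s) (hy' : y' ∈ s) :
    |f x - f y| * |x' - y'| ≤ M * |f x' - f y'| * |x - y| := by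
  obtain ⟨z, hz, hxy⟩ := exists_abs_sub_eq_abs_deriv_mul hs hf hx hy
  obtain ⟨w, hw, hxy'⟩ := exists_abs_sub_eq_abs_deriv_mul hs hf hx' hy'
  calc |f x - f y| * |x' - y'| = |deriv f z| * (|x - y| * |x' - y'|) := by rw [hxy]; ring
    _ ≤ M * |deriv f w| * (|x - y| * |x' - y'|) := by gcongr; exact hM z hz w hw
    _ = M * |f x' - f y'| * |x - y| := by rw [hxy']; ring

lemma strictMonoOn_of_forall_deriv_pos {f : ℝ → ℝ} {s : Set ℝ} (hs : Convex ℝ s)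
    (hf : ∀ z ∈ s, 0 < deriv f z) : StrictMonoOn f s :=
  strictMonoOn_of_deriv_pos hs
    (fun z hz ↦ (differentiableAt_of_deriv_ne_zero (hf z hz).ne').continuousAt.continuousWithinAt)
    (fun z hz ↦ hf z (interior_subset hz))

end MeanValue

lemma abs_sub_div_le_one_of_mem_Icc {u v x y : ℝ} (hx : x ∈ Icc u v) (hy : y ∈ Icc u v) :
    |x - y| / (v - u) ≤ 1 :=
  div_le_one_of_le₀ (Real.dist_le_of_mem_Icc hx hy) (sub_nonneg.2 (hx.1.trans hx.2))

/-- The variation of `log f'` on `[u, v]` is at most `ε` times the distance relative to the length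
of `[u, v]`. Measuring distances relatively makes `ε` comparable between intervals of different
scales. -/
def LogDerivDistortionOn (f : ℝ → ℝ) (ε u v : ℝ) : Prop :=
  ∀ x ∈ Icc u v, ∀ y ∈ Icc u v, |log (deriv f x) - log (deriv f y)| ≤ ε * (|x - y| / (v - u))

namespace LogDerivDistortionOn

variable {f : ℝ → ℝ} {ε δ u v x y : ℝ}

lemma mono (h : LogDerivDistortionOn f ε u v) (hεδ : ε ≤ δ) : LogDerivDistortionOn f δ u v := by
  intro x hx y hy
  have hratio : 0 ≤ |x - y| / (v - u) :=
    div_nonneg (abs_nonneg _) (sub_nonneg.2 (hx.1.trans hx.2))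
  exact (h x hx y hy).trans (by gcongr)

lemma nonneg (h : LogDerivDistortionOn f ε u v) (huv : u < v) : 0 ≤ ε := by
  have hends := (abs_nonneg _).trans (h v (right_mem_Icc.2 huv.le) u (left_mem_Icc.2 huv.le))
  rwa [abs_of_pos (sub_pos.2 huv), div_self (sub_pos.2 huv).ne', mul_one] at hends

lemma deriv_le_exp_mul (h : LogDerivDistortionOn f ε u v) (huv : u < v)
    (hpos : ∀ z ∈ Icc u v, 0 < deriv f z) (hx : x ∈ Icc u v) (hy : y ∈ Icc u v) :
    deriv f x ≤ exp ε * deriv f y := by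
  have hlog : log (deriv f x) ≤ ε + log (deriv f y) := by
    linarith [le_abs_self (log (deriv f x) - log (deriv f y)), h x hx y hy,
      mul_le_of_le_one_right (h.nonneg huv) (abs_sub_div_le_one_of_mem_Icc hx hy)]
  rwa [log_le_iff_le_exp (hpos x hx), exp_add, exp_log (hpos y hy)] at hlog

lemma relDist_le_exp_mul (h : LogDerivDistortionOn f ε u v) (huv : u < v)
    (hpos : ∀ z ∈ Icc u v, 0 < deriv f z) (hx : x ∈ Icc u v) (hy : y ∈ Icc u v) :
    |x - y| / (v - u) ≤ exp ε * (|f x - f y| / (f v - f u)) := by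
  have hu : u ∈ Icc u v := left_mem_Icc.2 huv.le
  have hv : v ∈ Icc u v := right_mem_Icc.2 huv.le
  have hfuv : f u < f v := strictMonoOn_of_forall_deriv_pos (convex_Icc u v) hpos hu hv huv
  have hmvt : |f v - f u| * |x - y| ≤ exp ε * |f x - f y| * |v - u| := by
    refine abs_sub_mul_abs_sub_le_of_abs_deriv_le (convex_Icc u v)
      (fun z hz ↦ differentiableAt_of_deriv_ne_zero (hpos z hz).ne') (fun z hz w hw ↦ ?_)
      hv hu hx hy
    rw [abs_of_pos (hpos z hz), abs_of_pos (hpos w hw)]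
    exact h.deriv_le_exp_mul huv hpos hz hw
  rw [abs_of_pos (sub_pos.2 hfuv), abs_of_pos (sub_pos.2 huv)] at hmvt
  rw [← mul_div_assoc, div_le_div_iff₀ (sub_pos.2 huv) (sub_pos.2 hfuv)]
  linarith

end LogDerivDistortionOn

/-- The intervals `[a (n + 1), a n]` are successive fundamental domains of `f`: each is mapped
increasingly onto the previous one. Positivity of `deriv f` includes differentiability, since
`deriv` is `0` elsewhere. -/
structure IsFundamentalLadder (f : ℝ → ℝ) (a : ℕ → ℝ) : Prop where
  succ_lt : ∀ n, a (n + 1) < a n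
  map_succ : ∀ n, f (a (n + 1)) = a n
  deriv_pos : ∀ n, ∀ x ∈ Icc (a (n + 1)) (a n), 0 < deriv f x

namespace IsFundamentalLadder

variable {f : ℝ → ℝ} {a ε : ℕ → ℝ} {x y : ℝ}

lemma differentiableAt (h : IsFundamentalLadder f a) {n : ℕ} (hx : x ∈ Icc (a (n + 1)) (a n)) :
    DifferentiableAt ℝ f x :=
  differentiableAt_of_deriv_ne_zero (h.deriv_pos n x hx).ne'

lemma map_mem (h : IsFundamentalLadder f a) {n : ℕ} (hx : x ∈ Icc (a (n + 2)) (a (n + 1))) :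
    f x ∈ Icc (a (n + 1)) (a n) := by
  have hmono := strictMonoOn_of_forall_deriv_pos (convex_Icc _ _) (h.deriv_pos (n + 1))
  simpa only [h.map_succ] using hmono.monotoneOn.mapsTo_Icc hx

lemma iterate_mem (h : IsFundamentalLadder f a) {m i : ℕ}
    (hx : x ∈ Icc (a (m + i + 1)) (a (m + i))) : f^[i] x ∈ Icc (a (m + 1)) (a m) := by
  induction i generalizing m with
  | zero => exact hx
  | succ i ih =>
    rw [← add_assoc, add_right_comm m i 1] at hx
    rw [Function.iterate_succ_apply']
    exact h.map_mem (ih hx)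

lemma differentiableAt_iterate (h : IsFundamentalLadder f a) {m i : ℕ}
    (hx : x ∈ Icc (a (m + i + 1)) (a (m + i))) : DifferentiableAt ℝ f^[i] x := by
  induction i generalizing m with
  | zero => exact differentiableAt_id
  | succ i ih =>
    rw [← add_assoc, add_right_comm m i 1] at hx
    rw [Function.iterate_succ']
    exact (h.differentiableAt (h.iterate_mem hx)).comp x (ih hx)

lemma deriv_iterate_succ (h : IsFundamentalLadder f a) {m i : ℕ}
    (hx : x ∈ Icc (a (m + i + 1)) (a (m + i))) :
    deriv f^[i + 1] x = deriv f (f^[i] x) * deriv f^[i] x := by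
  rw [Function.iterate_succ']
  exact deriv_comp x (h.differentiableAt (h.iterate_mem hx)) (h.differentiableAt_iterate hx)

lemma deriv_iterate_pos (h : IsFundamentalLadder f a) {m i : ℕ}
    (hx : x ∈ Icc (a (m + i + 1)) (a (m + i))) : 0 < deriv f^[i] x := by
  induction i generalizing m with
  | zero => simp only [Function.iterate_zero, deriv_id, zero_lt_one]
  | succ i ih =>
    rw [← add_assoc, add_right_comm m i 1] at hx
    rw [h.deriv_iterate_succ hx]
    exact mul_pos (h.deriv_pos _ _ (h.iterate_mem hx)) (ih hx)

lemma log_deriv_iterate_succ (h : IsFundamentalLadder f a) {m i : ℕ}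
    (hx : x ∈ Icc (a (m + i + 1)) (a (m + i))) :
    log (deriv f^[i + 1] x) = log (deriv f (f^[i] x)) + log (deriv f^[i] x) := by
  rw [h.deriv_iterate_succ hx,
    log_mul (h.deriv_pos _ _ (h.iterate_mem hx)).ne' (h.deriv_iterate_pos hx).ne']

theorem abs_log_deriv_iterate_sub_le (h : IsFundamentalLadder f a)
    (hε : ∀ n, LogDerivDistortionOn f (ε n) (a (n + 1)) (a n)) {m i : ℕ}
    (hx : x ∈ Icc (a (m + i + 1)) (a (m + i))) (hy : y ∈ Icc (a (m + i + 1)) (a (m + i))) :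
    |log (deriv f^[i] x) - log (deriv f^[i] y)| ≤
      (∑ k ∈ Finset.Ico (m + 1) (m + 1 + i), ε k) *
        exp (∑ k ∈ Finset.Ico (m + 1) (m + 1 + i), ε k) *
        (|f^[i] x - f^[i] y| / (a m - a (m + 1))) := by
  induction i generalizing m with
  | zero => simp
  | succ i ih =>
    rw [← add_assoc, add_right_comm m i 1] at hx hy
    rw [h.log_deriv_iterate_succ hx, h.log_deriv_iterate_succ hy,
      show m + 1 + (i + 1) = m + 1 + 1 + i by omega,
      Finset.sum_eq_sum_Ico_succ_bot (by omega : m + 1 < m + 1 + 1 + i)]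
    specialize ih hx hy
    have hX := h.iterate_mem hx
    have hY := h.iterate_mem hy
    have hstep := hε (m + 1) _ hX _ hY
    have hexpand := (hε (m + 1)).relDist_le_exp_mul (h.succ_lt _) (h.deriv_pos _) hX hY
    rw [h.map_succ, h.map_succ, ← Function.iterate_succ_apply' f,
      ← Function.iterate_succ_apply' f] at hexpand
    have hnonneg : ∀ n, 0 ≤ ε n := fun n ↦ (hε n).nonneg (h.succ_lt n)
    set S := ∑ k ∈ Finset.Ico (m + 1 + 1) (m + 1 + 1 + i), ε k
    set r := |f^[i] x - f^[i] y| / (a (m + 1) - a (m + 1 + 1))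
    set r' := |f^[i + 1] x - f^[i + 1] y| / (a m - a (m + 1))
    have hS : 0 ≤ S := Finset.sum_nonneg fun k _ ↦ hnonneg k
    have hr : 0 ≤ r := div_nonneg (abs_nonneg _) (sub_pos.2 (h.succ_lt _)).le
    have hle_exp : ε (m + 1) ≤ ε (m + 1) * exp S :=
      le_mul_of_one_le_right (hnonneg _) (one_le_exp hS)
    rw [add_sub_add_comm]
    calc _ ≤ ε (m + 1) * r + S * exp S * r := (abs_add_le _ _).trans (add_le_add hstep ih)
      _ ≤ ε (m + 1) * exp S * r + S * exp S * r := by gcongr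
      _ = (ε (m + 1) + S) * exp S * r := by ring
      _ ≤ (ε (m + 1) + S) * exp S * (exp (ε (m + 1)) * r') := by
        have := hnonneg (m + 1)
        gcongr
      _ = (ε (m + 1) + S) * exp (ε (m + 1) + S) * r' := by rw [exp_add]; ring

end IsFundamentalLadder

section PowerEstimates

variable {θ u v x y : ℝ}

lemma rpow_sub_one_le_mul_rpow_sub_one (hθ : 0 ≤ θ) (hu : 0 < u) (hx : x ∈ Icc u v)
    (hy : y ∈ Icc u v) : x ^ (θ - 1) ≤ (v / u) ^ (θ + 1) * y ^ (θ - 1) := by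
  have hx0 : 0 < x := hu.trans_le hx.1
  have hy0 : 0 < y := hu.trans_le hy.1
  have hv : 0 < v := hx0.trans_le hx.2
  calc x ^ (θ - 1) = x ^ θ / x := rpow_sub_one hx0.ne' θ
    _ ≤ v ^ θ / u := by gcongr; exacts [hx.2, hx.1]
    _ = (v / u) ^ (θ + 1) * (u ^ θ / v) := by
      rw [rpow_add_one (by positivity), div_rpow hv.le hu.le]
      field_simp
    _ ≤ (v / u) ^ (θ + 1) * (y ^ θ / y) := by gcongr; exacts [hy.1, hy.2]
    _ = (v / u) ^ (θ + 1) * y ^ (θ - 1) := by rw [rpow_sub_one hy0.ne']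

lemma abs_rpow_sub_rpow_le (hθ : 0 ≤ θ) (hu : 0 < u) (huv : u < v) (hx : x ∈ Icc u v)
    (hy : y ∈ Icc u v) :
    |x ^ θ - y ^ θ| ≤ (v / u) ^ (θ + 1) * (v ^ θ - u ^ θ) * (|x - y| / (v - u)) := by
  have hpos : ∀ z ∈ Icc u v, 0 < z := fun z hz ↦ hu.trans_le hz.1
  have hmvt : |x ^ θ - y ^ θ| * |v - u| ≤ (v / u) ^ (θ + 1) * |v ^ θ - u ^ θ| * |x - y| := by
    refine abs_sub_mul_abs_sub_le_of_abs_deriv_le (f := (· ^ θ)) (convex_Icc u v)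
      (fun z hz ↦ differentiableAt_rpow_const_of_ne θ (hpos z hz).ne') (fun z hz w hw ↦ ?_)
      hx hy (right_mem_Icc.2 huv.le) (left_mem_Icc.2 huv.le)
    rw [Real.deriv_rpow_const, Real.deriv_rpow_const, abs_mul, abs_mul,
      abs_of_pos (rpow_pos_of_pos (hpos z hz) _), abs_of_pos (rpow_pos_of_pos (hpos w hw) _),
      mul_left_comm]
    gcongr
    exact rpow_sub_one_le_mul_rpow_sub_one hθ hu hz hw
  rw [abs_of_pos (sub_pos.2 huv), abs_of_nonneg (sub_nonneg.2 (by gcongr : u ^ θ ≤ v ^ θ))] at hmvt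
  rwa [← mul_div_assoc, le_div_iff₀ (sub_pos.2 huv)]

lemma abs_log_sub_log_le_abs_sub (hx : 1 ≤ x) (hy : 1 ≤ y) : |log x - log y| ≤ |x - y| := by
  wlog hyx : y ≤ x generalizing x y
  · rw [abs_sub_comm, abs_sub_comm x]
    exact this hy hx (le_of_not_ge hyx)
  have hy0 : 0 < y := one_pos.trans_le hy
  rw [abs_of_nonneg (sub_nonneg.2 (log_le_log hy0 hyx)), abs_of_nonneg (sub_nonneg.2 hyx)]
  calc log x - log y = log (x / y) := (log_div (by positivity) (by positivity)).symm
    _ ≤ x / y - 1 := log_le_sub_one_of_pos (by positivity)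
    _ = (x - y) / y := div_sub_one hy0.ne'
    _ ≤ x - y := div_le_self (sub_nonneg.2 hyx) hy

end PowerEstimates

/-- The expanding branch `φ z = z (1 + z ^ θ)` of an intermittent interval map, with a neutral
fixed point at `0`. Here `z ^ θ` is the real power, which is only meaningful for `0 ≤ z`. -/
noncomputable def intermittentMap (θ z : ℝ) : ℝ := z * (1 + z ^ θ)

section IntermittentMap

variable {θ u v z : ℝ}

lemma deriv_intermittentMap (θ : ℝ) (hz : 0 < z) :
    deriv (intermittentMap θ) z = 1 + (1 + θ) * z ^ θ := by
  have hderiv := (hasDerivAt_id z).mul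
    ((Real.hasDerivAt_rpow_const (p := θ) (Or.inl hz.ne')).const_add 1)
  refine (hderiv.congr_deriv ?_).deriv
  rw [id, rpow_sub_one hz.ne']
  field_simp
  ring

lemma one_le_deriv_intermittentMap (hθ : 0 ≤ θ) (hz : 0 < z) :
    1 ≤ deriv (intermittentMap θ) z := by
  rw [deriv_intermittentMap θ hz]
  exact le_add_of_nonneg_right (by positivity)

lemma logDerivDistortionOn_intermittentMap (hθ : 0 ≤ θ) (hu : 0 < u) (huv : u < v) :
    LogDerivDistortionOn (intermittentMap θ)
      ((1 + θ) * ((v / u) ^ (θ + 1) * (v ^ θ - u ^ θ))) u v := by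
  intro x hx y hy
  have hx0 : 0 < x := hu.trans_le hx.1
  have hy0 : 0 < y := hu.trans_le hy.1
  calc |log (deriv (intermittentMap θ) x) - log (deriv (intermittentMap θ) y)|
    _ ≤ |deriv (intermittentMap θ) x - deriv (intermittentMap θ) y| :=
      abs_log_sub_log_le_abs_sub (one_le_deriv_intermittentMap hθ hx0)
        (one_le_deriv_intermittentMap hθ hy0)
    _ = (1 + θ) * |x ^ θ - y ^ θ| := by
      rw [deriv_intermittentMap θ hx0, deriv_intermittentMap θ hy0, add_sub_add_left_eq_sub,
        ← mul_sub, abs_mul, abs_of_nonneg (by positivity)]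
    _ ≤ (1 + θ) * ((v / u) ^ (θ + 1) * (v ^ θ - u ^ θ) * (|x - y| / (v - u))) := by
      gcongr
      exact abs_rpow_sub_rpow_le hθ hu huv hx hy
    _ = _ := (mul_assoc _ _ _).symm

end IntermittentMap

section PreimageSequence

variable {θ : ℝ} {a : ℕ → ℝ}

lemma pos_of_forall_succ_mem_Ioo (ha : ∀ n, a (n + 1) ∈ Ioo 0 (a n)) (n : ℕ) : 0 < a n :=
  (ha n).1.trans (ha n).2

lemma isFundamentalLadder_intermittentMap (hθ : 0 ≤ θ)
    (hrec : ∀ n, a (n + 1) ∈ Ioo 0 (a n) ∧ intermittentMap θ (a (n + 1)) = a n) :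
    IsFundamentalLadder (intermittentMap θ) a where
  succ_lt n := (hrec n).1.2
  map_succ n := (hrec n).2
  deriv_pos n _ hx :=
    one_pos.trans_le (one_le_deriv_intermittentMap hθ ((hrec n).1.1.trans_le hx.1))

/-- A bound for the distortion of `intermittentMap θ` on `[a (k + 1), a k]`, where `a` is a
sequence of successive preimages; the prefactor comes from `a k / a (k + 1) ≤ 1 + a 0 ^ θ`. -/
noncomputable def ladderDistortion (θ : ℝ) (a : ℕ → ℝ) (k : ℕ) : ℝ :=
  (1 + θ) * ((1 + a 0 ^ θ) ^ (θ + 1) * (a k ^ θ - a (k + 1) ^ θ))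

lemma logDerivDistortionOn_ladderDistortion (hθ : 0 ≤ θ)
    (hrec : ∀ n, a (n + 1) ∈ Ioo 0 (a n) ∧ intermittentMap θ (a (n + 1)) = a n) (n : ℕ) :
    LogDerivDistortionOn (intermittentMap θ) (ladderDistortion θ a n) (a (n + 1)) (a n) := by
  have ha : ∀ k, 0 < a k := pos_of_forall_succ_mem_Ioo fun k ↦ (hrec k).1
  have hlt : a (n + 1) < a n := (hrec n).1.2
  have hle : a (n + 1) ≤ a 0 :=
    antitone_nat_of_succ_le (fun k ↦ (hrec k).1.2.le) (Nat.zero_le (n + 1))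
  have hratio : a n / a (n + 1) ≤ 1 + a 0 ^ θ := by
    rw [← (hrec n).2, intermittentMap, mul_div_cancel_left₀ _ (ha (n + 1)).ne']
    have := (ha (n + 1)).le
    gcongr
  refine (logDerivDistortionOn_intermittentMap hθ (ha (n + 1)) hlt).mono ?_
  have hdiff : 0 ≤ a n ^ θ - a (n + 1) ^ θ :=
    sub_nonneg.2 (rpow_le_rpow (ha (n + 1)).le hlt.le hθ)
  have := div_pos (ha n) (ha (n + 1))
  unfold ladderDistortion
  gcongr

lemma sum_ladderDistortion_le (hθ : 0 ≤ θ) (ha : ∀ n, a (n + 1) ∈ Ioo 0 (a n)) {m n : ℕ}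
    (hmn : m ≤ n) :
    ∑ k ∈ Finset.Ico m n, ladderDistortion θ a k ≤
      (1 + θ) * ((1 + a 0 ^ θ) ^ (θ + 1) * a 0 ^ θ) := by
  have hpos : ∀ k, 0 < a k := pos_of_forall_succ_mem_Ioo ha
  have hle : a m ≤ a 0 := antitone_nat_of_succ_le (fun k ↦ (ha k).2.le) (Nat.zero_le m)
  have htelescope : ∑ k ∈ Finset.Ico m n, (a k ^ θ - a (k + 1) ^ θ) = a m ^ θ - a n ^ θ := by
    rw [← neg_inj, ← Finset.sum_neg_distrib, neg_sub]
    simp only [neg_sub]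
    exact Finset.sum_Ico_sub (fun k ↦ a k ^ θ) hmn
  have hbound : a m ^ θ - a n ^ θ ≤ a 0 ^ θ :=
    (sub_le_self _ (rpow_nonneg (hpos n).le θ)).trans (rpow_le_rpow (hpos m).le hle hθ)
  have := hpos 0
  simp only [ladderDistortion, ← Finset.mul_sum, htelescope]
  gcongr

theorem intermittent_iterate_distortion_general (hθ : 0 ≤ θ)
    (hrec : ∀ n, a (n + 1) ∈ Ioo 0 (a n) ∧ intermittentMap θ (a (n + 1)) = a n) :
    ∃ C : ℝ, 0 < C ∧ ∀ n i : ℕ, i ≤ n →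
      ∀ x ∈ Icc (a (n + 1)) (a n), ∀ y ∈ Icc (a (n + 1)) (a n),
        |log (deriv (intermittentMap θ)^[i] x / deriv (intermittentMap θ)^[i] y)| ≤
            C * |(intermittentMap θ)^[i] x - (intermittentMap θ)^[i] y| /
              (a (n - i) - a (n - i + 1)) ∧
          C * |(intermittentMap θ)^[i] x - (intermittentMap θ)^[i] y| /
            (a (n - i) - a (n - i + 1)) ≤ C := by
  have ha0 : 0 < a 0 := pos_of_forall_succ_mem_Ioo (fun n ↦ (hrec n).1) 0
  have hladder := isFundamentalLadder_intermittentMap hθ hrec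
  set K := (1 + θ) * ((1 + a 0 ^ θ) ^ (θ + 1) * a 0 ^ θ)
  refine ⟨K * exp K, by positivity, fun n i hin x hx y hy ↦ ?_⟩
  obtain ⟨m, rfl⟩ := Nat.exists_eq_add_of_le' hin
  rw [Nat.add_sub_cancel, mul_div_assoc,
    log_div (hladder.deriv_iterate_pos hx).ne' (hladder.deriv_iterate_pos hy).ne']
  constructor
  · have hr : 0 ≤ |(intermittentMap θ)^[i] x - (intermittentMap θ)^[i] y| / (a m - a (m + 1)) :=
      div_nonneg (abs_nonneg _) (sub_pos.2 (hladder.succ_lt m)).le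
    have hsum : ∑ k ∈ Finset.Ico (m + 1) (m + 1 + i), ladderDistortion θ a k ≤ K :=
      sum_ladderDistortion_le hθ (fun n ↦ (hrec n).1) (Nat.le_add_right _ _)
    refine (hladder.abs_log_deriv_iterate_sub_le
      (logDerivDistortionOn_ladderDistortion hθ hrec) hx hy).trans ?_
    gcongr
  · exact mul_le_of_le_one_right (by positivity)
      (abs_sub_div_le_one_of_mem_Icc (hladder.iterate_mem hx) (hladder.iterate_mem hy))

end PreimageSequence

/-- Let `0 < θ < 1`, let `φ(a) = a(1 + a^θ)` and let `(a_n)` be defined by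
`a₀ ∈ (0,1)` and `a_{n+1} ∈ (0, a_n)` with `φ(a_{n+1}) = a_n`. Then there is `C > 0` such
that for all `n ≥ 1`, all `1 ≤ i ≤ n` and all `x, y ∈ [a_{n+1}, a_n]`,
`log((φ^i)'(x)/(φ^i)'(y)) ≤ C |φ^i(x) - φ^i(y)| / (a_{n-i} - a_{n-i+1})`, and moreover this
bound is at most `C`. -/
theorem intermittent_iterate_distortion (θ : ℝ) (hθ0 : 0 < θ) (hθ1 : θ < 1)
    (a : ℕ → ℝ) (ha0 : a 0 ∈ Set.Ioo (0 : ℝ) 1)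
    (hrec : ∀ n : ℕ, a (n + 1) ∈ Set.Ioo 0 (a n) ∧
      a (n + 1) * (1 + a (n + 1) ^ θ) = a n) :
    ∃ C : ℝ, 0 < C ∧ ∀ n : ℕ, 1 ≤ n → ∀ i : ℕ, 1 ≤ i → i ≤ n →
      ∀ x ∈ Set.Icc (a (n + 1)) (a n), ∀ y ∈ Set.Icc (a (n + 1)) (a n),
        Real.log (deriv ((fun z : ℝ => z * (1 + z ^ θ))^[i]) x /
              deriv ((fun z : ℝ => z * (1 + z ^ θ))^[i]) y) ≤
            C * |(fun z : ℝ => z * (1 + z ^ θ))^[i] x -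
                (fun z : ℝ => z * (1 + z ^ θ))^[i] y| /
              (a (n - i) - a (n - i + 1)) ∧
          C * |(fun z : ℝ => z * (1 + z ^ θ))^[i] x -
              (fun z : ℝ => z * (1 + z ^ θ))^[i] y| /
            (a (n - i) - a (n - i + 1)) ≤ C := by
  obtain ⟨C, hC, hbound⟩ := intermittent_iterate_distortion_general hθ0.le hrec
  exact ⟨C, hC, fun n _ i _ hin x hx y hy ↦
    (hbound n i hin x hx y hy).imp_left (le_abs_self _).trans⟩
end
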